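/- At every point p ∈ Ω one has [Y_{12}, X_2](p) = Z_1(p), and [X_1, Y_{1k}](p) = Z_k(p) for every 2 ≤ k ≤ n. -/

import Mathlib

open scoped InnerProductSpace BigOperators

noncomputable section

/-- `s_j(x) = ∑_{r=j}^n x_r²`. -/
def sfun (n j : ℕ) (x : EuclideanSpace ℝ (Fin (n + 1))) : ℝ :=
  ∑ r : Fin (n + 1), if j ≤ (r : ℕ) then x r ^ 2 else 0

/-- The `j`-th coordinate of `x` (read as a natural-number index, `0` out of range). -/
def coordfun (n : ℕ) (x : EuclideanSpace ℝ (Fin (n + 1))) (j : ℕ) : ℝ :=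
  if h : j < n + 1 then x ⟨j, h⟩ else 0

/-- The vector field `e_j(x) = √(s_j/s_{j-1}) ( −∂_{j−1} + (x_{j−1}/s_j) Σ_{r=j}^n x_r ∂_r )`. -/
def efun (n j : ℕ) (x : EuclideanSpace ℝ (Fin (n + 1))) : EuclideanSpace ℝ (Fin (n + 1)) :=
  WithLp.toLp 2 fun r => Real.sqrt (sfun n j x / sfun n (j - 1) x) *
    (-(if (r : ℕ) = j - 1 then 1 else 0)
      + coordfun n x (j - 1) / sfun n j x * (if j ≤ (r : ℕ) then x r else 0))

/-- `U = {x ∈ ℝ^{n+1} : x_n > 0}`. -/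
def Usph (n : ℕ) : Set (EuclideanSpace ℝ (Fin (n + 1))) := {x | 0 < coordfun n x n}

/-- The unit sphere `S^n ⊂ ℝ^{n+1}`. -/
def sph (n : ℕ) : Set (EuclideanSpace ℝ (Fin (n + 1))) :=
  {x | ∑ r : Fin (n + 1), x r ^ 2 = 1}

attribute [local instance] Matrix.normedAddCommGroup Matrix.normedSpace

/-- The ambient space of the trivialized configuration space
`Ω = U × ℝ^n × M_n(ℝ) ⊂ ℝ^{n+1} × ℝ^n × M_n(ℝ)`. -/
abbrev Conf (n : ℕ) :=
  EuclideanSpace ℝ (Fin (n + 1)) × EuclideanSpace ℝ (Fin n) × Matrix (Fin n) (Fin n) ℝ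

/-- The elementary matrix `E_{ik}` with `1`-based indices `i, k`. -/
def Emat (n i k : ℕ) : Matrix (Fin n) (Fin n) ℝ :=
  Matrix.of fun a b => if (a : ℕ) + 1 = i ∧ (b : ℕ) + 1 = k then 1 else 0

/-- The standard basis vector `ε_k` of `ℝ^n`, with a `1`-based index `k`. -/
def eps (n k : ℕ) : EuclideanSpace ℝ (Fin n) :=
  WithLp.toLp 2 fun i => if (i : ℕ) + 1 = k then 1 else 0

/-- The rolling vector field
`X_k(x, x̂, A) = (e_k(x), A ε_k, −Σ_{i=1}^{k−1} (x_{i−1}/√(s_{i−1} s_i)) A (E_{ik} − E_{ki}))`. -/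
def Xfield (n k : ℕ) : Conf n → Conf n := fun p =>
  (efun n k p.1, WithLp.toLp 2 (p.2.2.mulVec (WithLp.ofLp (eps n k))),
    -∑ i ∈ Finset.Icc 1 (k - 1),
      (coordfun n p.1 (i - 1) / Real.sqrt (sfun n (i - 1) p.1 * sfun n i p.1)) •
        (p.2.2 * (Emat n i k - Emat n k i)))

/-- `Y_{lk}(x, x̂, A) = (0, 0, A(E_{lk} − E_{kl}))`. -/
def Yfield (n l k : ℕ) : Conf n → Conf n := fun p =>
  (0, 0, p.2.2 * (Emat n l k - Emat n k l))

/-- `Z_k(x, x̂, A) = (0, A ε_k, 0)`. -/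
def Zfield (n k : ℕ) : Conf n → Conf n := fun p =>
  (0, WithLp.toLp 2 (p.2.2.mulVec (WithLp.ofLp (eps n k))), 0)

/-- The derivative of a function that is affine along the line through `p` directed by `v`. -/
theorem fderiv_apply_eq_of_affine_on_line {E F : Type*} [NormedAddCommGroup E] [NormedSpace ℝ E]
    [NormedAddCommGroup F] [NormedSpace ℝ F] {f : E → F} {p v : E} {w : F}
    (hf : DifferentiableAt ℝ f p) (h : ∀ t : ℝ, f (p + t • v) = f p + t • w) :
    fderiv ℝ f p v = w := by
  rw [← hf.lineDeriv_eq_fderiv, lineDeriv]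
  simp only [h]
  simpa using (((hasDerivAt_id (0 : ℝ)).smul_const w).const_add (f p)).deriv

theorem sfun_pos {n j : ℕ} (hj : j ≤ n) {x : EuclideanSpace ℝ (Fin (n + 1))}
    (hx : x ∈ Usph n) : 0 < sfun n j x := by
  have hx' : 0 < x ⟨n, n.lt_succ_self⟩ := by simpa [Usph, coordfun] using hx
  refine Finset.sum_pos' (fun r _ => by split_ifs <;> positivity)
    ⟨⟨n, n.lt_succ_self⟩, Finset.mem_univ _, ?_⟩
  simp only [hj, if_true]
  positivity

theorem differentiable_apply_euclidean {m : ℕ} (r : Fin m) :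
    Differentiable ℝ fun x : EuclideanSpace ℝ (Fin m) => x r :=
  (EuclideanSpace.proj (𝕜 := ℝ) r).differentiable

theorem differentiable_sfun (n j : ℕ) : Differentiable ℝ (sfun n j) := by
  unfold sfun
  refine Differentiable.fun_sum fun r _ => ?_
  split_ifs
  · exact (differentiable_apply_euclidean r).pow 2
  · exact differentiable_const _

theorem differentiable_coordfun (n j : ℕ) : Differentiable ℝ fun x => coordfun n x j := by
  unfold coordfun
  split_ifs
  · exact differentiable_apply_euclidean _
  · exact differentiable_const _

theorem differentiableAt_efun {n j : ℕ} (hj : j ≤ n) {x : EuclideanSpace ℝ (Fin (n + 1))}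
    (hx : x ∈ Usph n) : DifferentiableAt ℝ (efun n j) x := by
  have hs := sfun_pos hj hx
  have hs' := sfun_pos ((Nat.sub_le j 1).trans hj) hx
  rw [differentiableAt_euclidean]
  intro r
  have hr : DifferentiableAt ℝ
      (fun y : EuclideanSpace ℝ (Fin (n + 1)) => if j ≤ (r : ℕ) then y r else 0) x := by
    split_ifs
    · exact differentiable_apply_euclidean r x
    · exact differentiableAt_const _
  have hsd : DifferentiableAt ℝ (sfun n j) x := differentiable_sfun n j x
  have hsd' : DifferentiableAt ℝ (sfun n (j - 1)) x := differentiable_sfun n (j - 1) x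
  have hcd : DifferentiableAt ℝ (fun y => coordfun n y (j - 1)) x :=
    differentiable_coordfun n (j - 1) x
  simp only [efun, div_eq_mul_inv]
  exact ((hsd.fun_mul (hsd'.fun_inv hs'.ne')).sqrt (mul_pos hs (inv_pos.mpr hs')).ne').fun_mul
    (((hcd.fun_mul (hsd.fun_inv hs.ne')).fun_mul hr).const_add _)

theorem differentiable_mul_const_matrix {n : ℕ} (M : Matrix (Fin n) (Fin n) ℝ) :
    Differentiable ℝ fun A : Matrix (Fin n) (Fin n) ℝ => A * M :=
  (LinearMap.toContinuousLinearMap (LinearMap.mulRight ℝ M)).differentiable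

theorem differentiable_toLp_mulVec {n : ℕ} (v : Fin n → ℝ) :
    Differentiable ℝ fun A : Matrix (Fin n) (Fin n) ℝ =>
      (WithLp.toLp 2 (A.mulVec v) : EuclideanSpace ℝ (Fin n)) :=
  (LinearMap.toContinuousLinearMap
    ((WithLp.linearEquiv 2 ℝ (Fin n → ℝ)).symm.toLinearMap ∘ₗ
      (Matrix.mulVecBilin ℝ ℝ).flip v)).differentiable

theorem differentiableAt_Xfield {n k : ℕ} (hk : k ≤ n) {p : Conf n} (hp : p.1 ∈ Usph n) :
    DifferentiableAt ℝ (Xfield n k) p := by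
  have hA : DifferentiableAt ℝ (fun q : Conf n => q.2.2) p :=
    differentiableAt_snd.comp p differentiableAt_snd
  refine ((differentiableAt_efun hk hp).comp p differentiableAt_fst).prodMk
    (((differentiable_toLp_mulVec _ _).comp p hA).prodMk ?_)
  refine (DifferentiableAt.fun_sum fun i hi => ?_).neg
  have hi' : i ≤ n := by
    have := (Finset.mem_Icc.mp hi).2
    omega
  have hs := mul_pos (sfun_pos ((Nat.sub_le i 1).trans hi') hp) (sfun_pos hi' hp)
  have hc : DifferentiableAt ℝ (fun x => coordfun n x (i - 1) /
      Real.sqrt (sfun n (i - 1) x * sfun n i x)) p.1 := by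
    simp only [div_eq_mul_inv]
    exact (differentiable_coordfun n (i - 1) _).fun_mul
      ((((differentiable_sfun n (i - 1) _).fun_mul (differentiable_sfun n i _)).sqrt
        hs.ne').fun_inv (Real.sqrt_pos.mpr hs).ne')
  exact (hc.comp p differentiableAt_fst).smul ((differentiable_mul_const_matrix _ _).comp p hA)

theorem differentiable_Yfield (n l k : ℕ) : Differentiable ℝ (Yfield n l k) :=
  (differentiable_const _).prodMk ((differentiable_const _).prodMk
    ((differentiable_mul_const_matrix _).comp (differentiable_snd.comp differentiable_snd)))

theorem fderiv_Yfield (n l k : ℕ) (p v : Conf n) :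
    fderiv ℝ (Yfield n l k) p v = (0, 0, v.2.2 * (Emat n l k - Emat n k l)) := by
  refine fderiv_apply_eq_of_affine_on_line (differentiable_Yfield n l k p) fun t => ?_
  simp [Yfield, add_mul]

theorem fderiv_Xfield_vertical {n k : ℕ} (hk : k ≤ n) {p : Conf n} (hp : p.1 ∈ Usph n)
    (W : Matrix (Fin n) (Fin n) ℝ) :
    fderiv ℝ (Xfield n k) p (0, 0, W) =
      (0, WithLp.toLp 2 (W.mulVec (WithLp.ofLp (eps n k))),
        -∑ i ∈ Finset.Icc 1 (k - 1),
          (coordfun n p.1 (i - 1) / Real.sqrt (sfun n (i - 1) p.1 * sfun n i p.1)) •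
            (W * (Emat n i k - Emat n k i))) := by
  refine fderiv_apply_eq_of_affine_on_line (differentiableAt_Xfield hk hp) fun t => ?_
  simp only [Xfield, Prod.smul_mk, smul_zero, Prod.fst_add, Prod.snd_add, add_zero, add_mul,
    Prod.mk_add_mk, Matrix.add_mulVec, Matrix.smul_mulVec, WithLp.toLp_add, WithLp.toLp_smul,
    smul_add, Finset.sum_add_distrib, smul_neg, Finset.smul_sum, neg_add, Matrix.smul_mul]
  simp only [smul_comm t]

theorem Emat_mulVec_eps {n j : ℕ} (i k : ℕ) (hj : 1 ≤ j) (hjn : j ≤ n) :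
    (Emat n i k).mulVec (WithLp.ofLp (eps n j)) =
      if k = j then WithLp.ofLp (eps n i) else 0 := by
  ext a
  have h : (Emat n i k).mulVec (WithLp.ofLp (eps n j)) a = Emat n i k a ⟨j - 1, by omega⟩ := by
    rw [Matrix.mulVec, dotProduct, Finset.sum_eq_single ⟨j - 1, by omega⟩]
    · simp [eps, Nat.sub_add_cancel hj]
    · intro b _ hb
      have : (b : ℕ) + 1 ≠ j := fun h => hb (Fin.ext (by simp; omega))
      simp [eps, this]
    · simp
  rw [h]
  by_cases hk : k = j <;> simp [Emat, eps, Nat.sub_add_cancel hj, hk, eq_comm]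

/-- At every point `p ∈ Ω` one has `[Y_{12}, X_2](p) = Z_1(p)`, and
`[X_1, Y_{1k}](p) = Z_k(p)` for every `2 ≤ k ≤ n`. -/
theorem statement9 (n : ℕ) (hn : 2 ≤ n) (p : Conf n) (hU : p.1 ∈ Usph n) :
    (fderiv ℝ (Xfield n 2) p (Yfield n 1 2 p) - fderiv ℝ (Yfield n 1 2) p (Xfield n 2 p)
      = Zfield n 1 p) ∧
    (∀ k : ℕ, 2 ≤ k → k ≤ n →
      fderiv ℝ (Yfield n 1 k) p (Xfield n 1 p) - fderiv ℝ (Xfield n 1) p (Yfield n 1 k p)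
        = Zfield n k p) := by
  refine ⟨?_, fun k hk hkn => ?_⟩
  · rw [fderiv_Yfield, Yfield, fderiv_Xfield_vertical hn hU]
    simp [Xfield, Zfield, Matrix.sub_mulVec, ← Matrix.mulVec_mulVec, Emat_mulVec_eps, hn]
  · rw [fderiv_Yfield, Yfield, fderiv_Xfield_vertical (by omega) hU]
    simp [Xfield, Zfield, Matrix.sub_mulVec, ← Matrix.mulVec_mulVec, Emat_mulVec_eps,
      show 1 ≤ n by omega, show k ≠ 1 by omega, Matrix.mulVec_neg]
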